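/- Consistency of the nonlocal ∞-Laplacian at points of nonvanishing gradient: let φ ∈ C³(ℝ^d), f ∈ C²(𝕋^d) positive, α ∈ ℝ, Φ a C² kernel with Φ(s) ≥ 1 on (0,1) and Φ(s) = 0 for s ≥ 2, and define H_h φ(x) = max_{y∈𝕋^d} f(x)^α f(y)^α Φ(|x−y|/h)(φ(y)−φ(x)) + min_{y∈𝕋^d} f(x)^α f(y)^α Φ(|x−y|/h)(φ(y)−φ(x)). If x₀ satisfies ∇φ(x₀) ≠ 0 and Δ_∞φ(x₀) + 2α ∇log f(x₀)·∇φ(x₀) < 0, then for any sequence x_h → x₀ as h → 0⁺, limsup_{h→0⁺} h^{−2} H_h φ(x_h) < 0. -/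

import Mathlib

open scoped RealInnerProductSpace
open Filter

/-- The nonlocal (continuum) ∞-Laplacian with self-tuning weights:
`H_h φ(x) = max_y f(x)^α f(y)^α Φ(|x−y|/h)(φ(y)−φ(x)) + min_y (same)`. -/
noncomputable def nonlocalInfLap {d : ℕ} (f : EuclideanSpace ℝ (Fin d) → ℝ) (α : ℝ)
    (Φ : ℝ → ℝ) (φ : EuclideanSpace ℝ (Fin d) → ℝ) (h : ℝ)
    (x : EuclideanSpace ℝ (Fin d)) : ℝ :=
  sSup (Set.range fun y : EuclideanSpace ℝ (Fin d) =>
    Real.rpow (f x) α * Real.rpow (f y) α * Φ (dist x y / h) * (φ y - φ x)) +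
  sInf (Set.range fun y : EuclideanSpace ℝ (Fin d) =>
    Real.rpow (f x) α * Real.rpow (f y) α * Φ (dist x y / h) * (φ y - φ x))

open Asymptotics Topology

section aux
variable {E : Type*} [NormedAddCommGroup E] [NormedSpace ℝ E]

lemma second_diff {φ : E → ℝ} (hφ : ContDiff ℝ 2 φ) (x₀ : E) :
    (fun q : E × E => φ (q.1 + q.2) + φ (q.1 - q.2) - 2 * φ q.1 -
      fderiv ℝ (fderiv ℝ φ) x₀ q.2 q.2) =o[𝓝 (x₀, (0:E))] fun q => ‖q.2‖ ^ 2 := by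
  have hd : Differentiable ℝ φ := hφ.differentiable (by norm_num)
  have h1 : ContDiff ℝ 1 (fderiv ℝ φ) := hφ.fderiv_right (by norm_num)
  have h2 : HasStrictFDerivAt (fderiv ℝ φ) (fderiv ℝ (fderiv ℝ φ) x₀) x₀ :=
    h1.contDiffAt.hasStrictFDerivAt (by norm_num)
  have hsymm : ∀ v w, fderiv ℝ (fderiv ℝ φ) x₀ v w = fderiv ℝ (fderiv ℝ φ) x₀ w v := by
    intro v w
    exact (hφ.contDiffAt.isSymmSndFDerivAt (by simp)).eq v w
  rw [isLittleO_iff]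
  intro c hc
  have h3 := (isLittleO_iff.1 h2.isLittleO) (half_pos hc)
  rw [Metric.eventually_nhds_iff] at h3
  obtain ⟨δ, hδ, h3⟩ := h3
  rw [Metric.eventually_nhds_iff]
  refine ⟨δ / 2, by positivity, ?_⟩
  rintro ⟨x, v⟩ hq
  rw [Prod.dist_eq, max_lt_iff] at hq
  obtain ⟨hq1, hq2⟩ := hq
  simp only [dist_zero_right] at hq1 hq2
  set D := fderiv ℝ (fderiv ℝ φ) x₀ with hD
  have key := Convex.norm_image_sub_le_of_norm_hasFDerivWithin_le (𝕜 := ℝ)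
    (f := fun w => φ (x + w) + φ (x - w) - 2 * φ x - D w w)
    (f' := fun w => fderiv ℝ φ (x + w) - fderiv ℝ φ (x - w) - D ((x + w) - (x - w)))
    (s := Metric.closedBall (0:E) ‖v‖) (C := c * ‖v‖) (x := 0) (y := v) ?_ ?_
    (convex_closedBall _ _) (by simp) (by simp)
  · simp only [add_zero, sub_zero, map_zero] at key
    simp only [norm_pow, norm_norm]
    calc _ = _ := by
            congr 1; ring
      _ ≤ _ := key
      _ = _ := by ring
  · intro w hw
    have a1 : HasFDerivAt (fun w => φ (x + w)) (fderiv ℝ φ (x + w)) w := by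
      have := (hd (x + w)).hasFDerivAt.comp w ((hasFDerivAt_id w).const_add x)
      exact this.congr_fderiv (by ext z; simp)
    have a2 : HasFDerivAt (fun w => φ (x - w)) (-fderiv ℝ φ (x - w)) w := by
      have := (hd (x - w)).hasFDerivAt.comp w ((hasFDerivAt_id w).const_sub x)
      exact this.congr_fderiv (by ext z; simp)
    have a3 : HasFDerivAt (fun w => D w w) (2 • D w) w := by
      have := (D.hasFDerivAt (x := w)).clm_apply (hasFDerivAt_id w)
      exact this.congr_fderiv (by ext z; simp [hsymm z w, two_mul])
    have := (((a1.add a2).sub_const (2 * φ x)).sub a3).hasFDerivWithinAt (s := Metric.closedBall (0:E) ‖v‖)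
    refine this.congr_fderiv ?_
    have e : (x + w) - (x - w) = (2:ℝ) • w := by rw [two_smul]; abel
    ext z
    simp [e]
    ring
  · intro w hw
    have hw' : ‖w‖ ≤ ‖v‖ := by simpa using hw
    have := @h3 (x + w, x - w) ?_
    · refine this.trans ?_
      have e : (x + w) - (x - w) = (2:ℝ) • w := by rw [two_smul]; abel
      simp only [e, norm_smul]
      norm_num
      nlinarith
    · rw [Prod.dist_eq, max_lt_iff]
      simp only [dist_eq_norm] at hq1 ⊢
      constructor
      · calc ‖x + w - x₀‖ = ‖(x - x₀) + w‖ := by congr 1; abel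
          _ ≤ _ := norm_add_le _ _
          _ < δ := by linarith
      · calc ‖x - w - x₀‖ = ‖(x - x₀) - w‖ := by congr 1; abel
          _ ≤ _ := norm_sub_le _ _
          _ < δ := by linarith

lemma first_diff {φ : E → ℝ} (hφ : ContDiff ℝ 1 φ) (x₀ : E) :
    (fun q : E × E => φ (q.1 + q.2) - φ q.1 - fderiv ℝ φ x₀ q.2)
      =o[𝓝 (x₀, (0:E))] fun q => ‖q.2‖ := by
  have h2 : HasStrictFDerivAt φ (fderiv ℝ φ x₀) x₀ :=
    hφ.contDiffAt.hasStrictFDerivAt (by norm_num)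
  have ht : Tendsto (fun q : E × E => (q.1 + q.2, q.1)) (𝓝 (x₀, (0:E))) (𝓝 (x₀, x₀)) := by
    have : Continuous (fun q : E × E => (q.1 + q.2, q.1)) := by fun_prop
    simpa using this.tendsto (x₀, (0:E))
  have := (h2.isLittleO.comp_tendsto ht).norm_right
  simpa [Function.comp_def] using this

lemma first_diff_sub {φ : E → ℝ} (hφ : ContDiff ℝ 1 φ) (x₀ : E) :
    (fun q : E × E => φ (q.1 + q.2) - φ (q.1 - q.2) - 2 * fderiv ℝ φ x₀ q.2)
      =o[𝓝 (x₀, (0:E))] fun q => ‖q.2‖ := by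
  have h1 := first_diff hφ x₀
  have ht : Tendsto (fun q : E × E => (q.1, -q.2)) (𝓝 (x₀, (0:E))) (𝓝 (x₀, (0:E))) := by
    have : Continuous (fun q : E × E => (q.1, -q.2)) := by fun_prop
    simpa using this.tendsto (x₀, (0:E))
  have h2 := h1.comp_tendsto ht
  simp only [Function.comp_def, norm_neg] at h2
  refine (h1.sub h2).congr_left ?_
  intro q
  simp [sub_eq_add_neg]
  ring

lemma W_first {φ G : E → ℝ} (hφ : ContDiff ℝ 2 φ) (hG : ContDiff ℝ 1 G) (x₀ : E) :
    (fun q : E × E => G (q.1 + q.2) * (φ (q.1 + q.2) - φ q.1) - G x₀ * fderiv ℝ φ x₀ q.2)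
      =o[𝓝 (x₀, (0:E))] fun q => ‖q.2‖ := by
  have h1 := first_diff (hφ.of_le (by norm_num)) x₀
  have hGc : Tendsto (fun q : E × E => G (q.1 + q.2)) (𝓝 (x₀, (0:E))) (𝓝 (G x₀)) := by
    have hc := hG.continuous
    have : Continuous (fun q : E × E => G (q.1 + q.2)) := by fun_prop
    simpa using this.tendsto (x₀, (0:E))
  have hL : (fun q : E × E => fderiv ℝ φ x₀ q.2) =O[𝓝 (x₀, (0:E))] fun q => ‖q.2‖ :=
    ((fderiv ℝ φ x₀).isBigO_comp (fun q : E × E => q.2) _).norm_right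
  have hG0 : (fun q : E × E => G (q.1 + q.2) - G x₀) =o[𝓝 (x₀, (0:E))] fun _ => (1:ℝ) := by
    rw [isLittleO_one_iff]
    simpa using hGc.sub_const (G x₀)
  have a := (hGc.isBigO_one ℝ).mul_isLittleO h1
  have b := hG0.mul_isBigO hL
  refine ((a.add b).congr_left ?_).congr_right ?_
  · intro q; ring
  · intro q; simp

lemma W_second {φ G : E → ℝ} (hφ : ContDiff ℝ 2 φ) (hG : ContDiff ℝ 1 G) (x₀ : E) :
    (fun q : E × E => G (q.1 + q.2) * (φ (q.1 + q.2) - φ q.1) +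
        G (q.1 - q.2) * (φ (q.1 - q.2) - φ q.1) -
        (G x₀ * fderiv ℝ (fderiv ℝ φ) x₀ q.2 q.2 + 2 * (fderiv ℝ G x₀ q.2 * fderiv ℝ φ x₀ q.2)))
      =o[𝓝 (x₀, (0:E))] fun q => ‖q.2‖ ^ 2 := by
  have h1 := first_diff_sub (hφ.of_le (by norm_num)) x₀
  have h1G := first_diff_sub hG x₀
  have h2 := second_diff hφ x₀
  have hGc : Tendsto (fun q : E × E => (G (q.1 + q.2) + G (q.1 - q.2)) / 2) (𝓝 (x₀, (0:E)))
      (𝓝 (G x₀)) := by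
    have hc := hG.continuous
    have : Continuous (fun q : E × E => (G (q.1 + q.2) + G (q.1 - q.2)) / 2) := by fun_prop
    simpa using this.tendsto (x₀, (0:E))
  have hL : (fun q : E × E => fderiv ℝ φ x₀ q.2) =O[𝓝 (x₀, (0:E))] fun q => ‖q.2‖ :=
    ((fderiv ℝ φ x₀).isBigO_comp (fun q : E × E => q.2) _).norm_right
  have hLG : (fun q : E × E => fderiv ℝ G x₀ q.2) =O[𝓝 (x₀, (0:E))] fun q => ‖q.2‖ :=
    ((fderiv ℝ G x₀).isBigO_comp (fun q : E × E => q.2) _).norm_right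
  have hS : (fun q : E × E => fderiv ℝ (fderiv ℝ φ) x₀ q.2 q.2) =O[𝓝 (x₀, (0:E))]
      fun q => ‖q.2‖ ^ 2 := by
    refine IsBigO.of_bound ‖fderiv ℝ (fderiv ℝ φ) x₀‖ (Eventually.of_forall fun q => ?_)
    have := (fderiv ℝ (fderiv ℝ φ) x₀).le_opNorm₂ q.2 q.2
    simpa [pow_two, mul_assoc] using this
  have hG0 : (fun q : E × E => (G (q.1 + q.2) + G (q.1 - q.2)) / 2 - G x₀)
      =o[𝓝 (x₀, (0:E))] fun _ => (1:ℝ) := by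
    rw [isLittleO_one_iff]
    simpa using hGc.sub_const (G x₀)
  have hd : (fun q : E × E => φ (q.1 + q.2) - φ (q.1 - q.2)) =O[𝓝 (x₀, (0:E))] fun q => ‖q.2‖ := by
    refine (h1.isBigO.add (hL.const_mul_left 2)).congr_left ?_
    intro q; ring
  have a := (hGc.isBigO_one ℝ).mul_isLittleO h2
  have b := hG0.mul_isBigO hS
  have c := (h1G.mul_isBigO hd).const_mul_left (1/2)
  have e := (hLG.mul_isLittleO h1)
  have a' := a.congr_right (g₂ := fun q => ‖q.2‖ ^ 2) (by intro q; simp)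
  have b' := b.congr_right (g₂ := fun q => ‖q.2‖ ^ 2) (by intro q; simp)
  have c' := c.congr_right (g₂ := fun q => ‖q.2‖ ^ 2) (by intro q; simp [pow_two])
  have e' := e.congr_right (g₂ := fun q => ‖q.2‖ ^ 2) (by intro q; simp [pow_two])
  refine (((a'.add b').add c').add e').congr_left ?_
  intro q; ring

end aux

/-- deterministic core estimate; `N w = Gx * Φ (‖w‖ / h) * W w`. -/
lemma core_est {E : Type*} [NormedAddCommGroup E] [InnerProductSpace ℝ E]
    (Φ : ℝ → ℝ) (hΦ1 : ∀ s ∈ Set.Ioo (0 : ℝ) 1, 1 ≤ Φ s)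
    (hΦ0 : ∀ s, 0 ≤ Φ s) (hΦsupp : ∀ s, 2 ≤ s → Φ s = 0)
    (M : ℝ) (hM : 0 < M) (hΦM : ∀ s, 0 ≤ s → Φ s ≤ M)
    (Q : E → ℝ) (hQh : ∀ (r : ℝ) v, Q (r • v) = r ^ 2 * Q v)
    (K : ℝ) (hK : ∀ v, |Q v| ≤ K * ‖v‖ ^ 2)
    (p : E) (hp : p ≠ 0) (g c η ε δ : ℝ) (hg : 0 < g) (hc : 0 < c) (hη : 0 < η)
    (hε : 0 < ε) (hε1 : ε ≤ g * ‖p‖ / 2) (hε2 : ε ≤ c) (hε3 : 4 * ε < η ^ 2 * (g * ‖p‖))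
    (hQ : ∀ u, ‖u - ‖p‖⁻¹ • p‖ < η → Q u ≤ - (2 * c))
    (W : E → ℝ) (hW1 : ∀ v, ‖v‖ < δ → |W v - g * ⟪p, v⟫| ≤ ε * ‖v‖)
    (hW2 : ∀ v, ‖v‖ < δ → |W v + W (-v) - Q v| ≤ ε * ‖v‖ ^ 2)
    (h Gx : ℝ) (hh : 0 < h) (hhδ : 2 * h < δ) (hGx1 : g / 2 ≤ Gx) (hGx2 : Gx ≤ 2 * g)
    (S I : ℝ) (v z : E) (hS : S = Gx * Φ (‖v‖ / h) * W v)
    (hI : I = Gx * Φ (‖z‖ / h) * W z)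
    (hSmax : ∀ w, Gx * Φ (‖w‖ / h) * W w ≤ S)
    (hImin : ∀ w, I ≤ Gx * Φ (‖w‖ / h) * W w) :
    S + I ≤ - (g / 2 * c / (36 * M)) * h ^ 2 ∧ - (8 * g * M * (K + ε)) * h ^ 2 ≤ S + I := by
  have hP : 0 < ‖p‖ := norm_pos_iff.2 hp
  have hG : 0 < Gx := by linarith
  set e : E := ‖p‖⁻¹ • p with he
  have hen : ‖e‖ = 1 := by rw [he, norm_smul, norm_inv, norm_norm]; field_simp
  have hpe : ⟪p, e⟫ = ‖p‖ := by
    rw [he, inner_smul_right, real_inner_self_eq_norm_sq]; field_simp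
  have hK0 : 0 ≤ K := by
    have := (abs_nonneg _).trans (hK e)
    simpa [hen] using this
  constructor
  · -- upper bound
    have hW0 : ∀ r : ℝ, 0 ≤ r → r < δ → (g * ‖p‖ - ε) * r ≤ W (r • e) := by
      intro r hr hrδ
      have hn : ‖r • e‖ = r := by rw [norm_smul, hen, Real.norm_of_nonneg hr, mul_one]
      have := (abs_le.1 (hW1 (r • e) (by rwa [hn]))).1
      rw [hn, inner_smul_right, hpe] at this
      linarith
    have hcmp := hSmax ((h / 2) • e)
    have hn2 : ‖(h / 2) • e‖ = h / 2 := by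
      rw [norm_smul, hen, Real.norm_of_nonneg (by positivity), mul_one]
    rw [hn2, show h / 2 / h = 1 / 2 by field_simp] at hcmp
    have hΦh := hΦ1 (1 / 2) (by norm_num)
    have hWh := hW0 (h / 2) (by positivity) (by linarith)
    have hgp : 0 < g * ‖p‖ := by positivity
    have hlow : Gx * (g * ‖p‖ / 4 * h) ≤ S := by
      refine le_trans ?_ hcmp
      have : g * ‖p‖ / 4 * h ≤ W ((h / 2) • e) := by nlinarith
      have h0 : 0 ≤ g * ‖p‖ / 4 * h := by positivity
      rw [mul_assoc]
      apply mul_le_mul_of_nonneg_left _ hG.le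
      nlinarith
    have hSpos : 0 < S := lt_of_lt_of_le (by positivity) hlow
    set s := ‖v‖ / h with hs
    have hs0 : 0 ≤ s := by positivity
    have hvs : ‖v‖ = s * h := by rw [hs]; field_simp
    have hs2 : s < 2 := by
      by_contra hcon
      rw [hΦsupp s (not_lt.1 hcon)] at hS
      simp at hS
      linarith
    have hvδ : ‖v‖ < δ := by rw [hvs]; nlinarith
    have hΦs : 0 < Φ s := by
      refine lt_of_le_of_ne (hΦ0 s) ?_
      intro h0
      rw [← h0] at hS
      simp at hS
      linarith
    have hv1 := abs_le.1 (hW1 v hvδ)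
    have hin : ⟪p, v⟫ ≤ ‖p‖ * ‖v‖ := real_inner_le_norm p v
    have hWv : W v ≤ (3 / 2) * (g * ‖p‖) * (s * h) := by
      have h1 : g * ⟪p, v⟫ ≤ g * (‖p‖ * ‖v‖) := mul_le_mul_of_nonneg_left hin hg.le
      have h2 : ε * ‖v‖ ≤ g * ‖p‖ / 2 * ‖v‖ := mul_le_mul_of_nonneg_right hε1 (norm_nonneg _)
      rw [← hvs]
      linarith [hv1.2]
    have hsΦ : 1 / 6 ≤ Φ s * s := by
      have h1 : S ≤ Gx * Φ s * ((3 / 2) * (g * ‖p‖) * (s * h)) := by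
        rw [hS]; exact mul_le_mul_of_nonneg_left hWv (by positivity)
      have h2 : (Gx * (g * ‖p‖) * h) * (1 / 4) ≤ (Gx * (g * ‖p‖) * h) * (3 / 2 * (Φ s * s)) := by
        linarith
      have h3 := le_of_mul_le_mul_left h2 (by positivity)
      linarith
    have hspos : 0 < s := by
      rcases hs0.eq_or_lt with h0 | h0
      · rw [← h0] at hsΦ; norm_num at hsΦ
      · exact h0
    have hvpos : 0 < ‖v‖ := by rw [hvs]; positivity
    have hsΦ2 : 1 / (36 * M) ≤ Φ s * s ^ 2 := by
      have h1 := hΦM s hs0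
      rw [div_le_iff₀ (by positivity)]
      have h2 : 1 / 6 ≤ M * s := hsΦ.trans (mul_le_mul_of_nonneg_right h1 hs0)
      nlinarith
    -- direction
    have hdir : W (‖v‖ • e) ≤ W v := by
      have := hSmax (‖v‖ • e)
      rw [norm_smul, hen, norm_norm, mul_one, hS] at this
      exact le_of_mul_le_mul_left this (by positivity)
    have hWe := hW0 ‖v‖ hvpos.le hvδ
    have hang : (g * ‖p‖ - 2 * ε) * ‖v‖ ≤ g * ⟪p, v⟫ := by linarith [hv1.2]
    set u : E := ‖v‖⁻¹ • v with hu
    have hun : ‖u‖ = 1 := by rw [hu, norm_smul, norm_inv, norm_norm]; field_simp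
    have hvu : v = ‖v‖ • u := by rw [hu, smul_smul, mul_inv_cancel₀ hvpos.ne', one_smul]
    have hpu : (g * ‖p‖ - 2 * ε) ≤ g * ‖p‖ * ⟪u, e⟫ := by
      have h1 : ⟪p, v⟫ = ‖v‖ * (‖p‖ * ⟪u, e⟫) := by
        rw [hu, he, inner_smul_right, inner_smul_left, real_inner_comm]
        simp only [conj_trivial]
        field_simp
      rw [h1] at hang
      have h2 : ‖v‖ * (g * ‖p‖ - 2 * ε) ≤ ‖v‖ * (g * ‖p‖ * ⟪u, e⟫) := by linarith
      exact le_of_mul_le_mul_left h2 hvpos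
    have hue : ‖u - e‖ < η := by
      have h1 : ‖u - e‖ ^ 2 = 2 - 2 * ⟪u, e⟫ := by
        rw [norm_sub_sq_real, hun, hen]; ring
      have h2 : (g * ‖p‖) * ‖u - e‖ ^ 2 < (g * ‖p‖) * η ^ 2 := by
        rw [h1]; linarith
      have h3 := lt_of_mul_lt_mul_left h2 hgp.le
      exact lt_of_pow_lt_pow_left₀ 2 hη.le h3
    have hQv : Q v ≤ -(2 * c) * ‖v‖ ^ 2 := by
      rw [hvu, hQh, norm_smul, hun, norm_norm, mul_one]
      have := mul_le_mul_of_nonneg_left (hQ u hue) (sq_nonneg ‖v‖)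
      linarith
    have hsum : W v + W (-v) ≤ -c * ‖v‖ ^ 2 := by
      have h1 := (abs_le.1 (hW2 v hvδ)).2
      have h2 := mul_le_mul_of_nonneg_right hε2 (sq_nonneg ‖v‖)
      linarith
    have hIv := hImin (-v)
    rw [norm_neg, ← hs] at hIv
    calc S + I ≤ Gx * Φ s * (W v + W (-v)) := by rw [hS]; linarith
      _ ≤ Gx * Φ s * (-c * ‖v‖ ^ 2) := mul_le_mul_of_nonneg_left hsum (by positivity)
      _ = - (Gx * (Φ s * s ^ 2) * (c * h ^ 2)) := by rw [hvs]; ring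
      _ ≤ - (g / 2 * (1 / (36 * M)) * (c * h ^ 2)) := by gcongr
      _ = _ := by ring
  · have hSz := hSmax (-z)
    rw [norm_neg] at hSz
    set s := ‖z‖ / h with hs
    have hs0 : 0 ≤ s := by positivity
    have hvs : ‖z‖ = s * h := by rw [hs]; field_simp
    have h1 : Gx * Φ s * (W z + W (-z)) ≤ S + I := by rw [hI]; linarith
    refine le_trans ?_ h1
    by_cases hs2 : s < 2
    · have hvδ : ‖z‖ < δ := by rw [hvs]; nlinarith
      have hsum : -((K + ε) * ‖z‖ ^ 2) ≤ W z + W (-z) := by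
        have a := (abs_le.1 (hW2 z hvδ)).1
        have b := (abs_le.1 (hK z)).1
        linarith
      have hz4 : (K + ε) * ‖z‖ ^ 2 ≤ (K + ε) * (4 * h ^ 2) := by
        apply mul_le_mul_of_nonneg_left _ (by positivity)
        rw [hvs, mul_pow]
        apply mul_le_mul_of_nonneg_right _ (sq_nonneg h)
        nlinarith
      calc - (8 * g * M * (K + ε)) * h ^ 2 = -((2 * g) * M * ((K + ε) * (4 * h ^ 2))) := by ring
        _ ≤ -(Gx * Φ s * ((K + ε) * (4 * h ^ 2))) := by
            have := hΦM s hs0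
            have := hΦ0 s
            gcongr
        _ = Gx * Φ s * -((K + ε) * (4 * h ^ 2)) := by ring
        _ ≤ _ := mul_le_mul_of_nonneg_left (by linarith) (mul_nonneg hG.le (hΦ0 s))
    · rw [hΦsupp s (not_lt.1 hs2)]
      have : 0 ≤ (8 * g * M * (K + ε)) * h ^ 2 := by positivity
      linarith

lemma cpt_attained {E : Type*} [NormedAddCommGroup E] [ProperSpace E]
    (T : E → ℝ) (hT : Continuous T) (x : E) (R : ℝ) (h0 : ∀ y, R < dist y x → T y = 0) :
    (∃ y, sSup (Set.range T) = T y ∧ ∀ w, T w ≤ T y) ∧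
    (∃ z, sInf (Set.range T) = T z ∧ ∀ w, T z ≤ T w) := by
  have hc : HasCompactSupport T := HasCompactSupport.intro (isCompact_closedBall x R) (by
    intro y hy
    exact h0 y (by simpa using hy))
  obtain ⟨y, hy⟩ := hT.exists_forall_ge_of_hasCompactSupport hc
  obtain ⟨z, hz⟩ := hT.exists_forall_le_of_hasCompactSupport hc
  refine ⟨⟨y, ?_, hy⟩, ⟨z, ?_, hz⟩⟩
  · exact IsGreatest.csSup_eq ⟨⟨y, rfl⟩, by rintro _ ⟨w, rfl⟩; exact hy w⟩
  · exact IsLeast.csInf_eq ⟨⟨z, rfl⟩, by rintro _ ⟨w, rfl⟩; exact hz w⟩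

/-- Consistency of the nonlocal ∞-Laplacian at points of nonvanishing gradient: if
`∇φ(x₀) ≠ 0` and `Δ_∞φ(x₀) + 2α ∇log f(x₀)·∇φ(x₀) < 0`, then for any sequence `x_n → x₀`
with scales `h_n → 0⁺`, `limsup h_n^{−2} H_{h_n} φ(x_n) < 0`. -/
theorem nonlocal_infLap_consistency {d : ℕ}
    (φ : EuclideanSpace ℝ (Fin d) → ℝ) (hφ : ContDiff ℝ 3 φ)
    (f : EuclideanSpace ℝ (Fin d) → ℝ) (hf : ContDiff ℝ 2 f) (hfpos : ∀ x, 0 < f x)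
    (α : ℝ)
    (Φ : ℝ → ℝ) (hΦ : ContDiff ℝ 2 Φ) (hΦ1 : ∀ s ∈ Set.Ioo (0 : ℝ) 1, 1 ≤ Φ s)
    (hΦ0 : ∀ s, 0 ≤ Φ s) (hΦsupp : ∀ s, 2 ≤ s → Φ s = 0)
    (x₀ : EuclideanSpace ℝ (Fin d)) (hgrad : gradient φ x₀ ≠ 0)
    (hpde : ⟪gradient φ x₀, (fderiv ℝ (gradient φ) x₀) (gradient φ x₀)⟫ /
        ‖gradient φ x₀‖ ^ 2 +
        2 * α * (⟪gradient f x₀, gradient φ x₀⟫ / f x₀) < 0)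
    (x_ : ℕ → EuclideanSpace ℝ (Fin d)) (hx : Tendsto x_ atTop (nhds x₀))
    (h_ : ℕ → ℝ) (hh : ∀ n, 0 < h_ n) (hh0 : Tendsto h_ atTop (nhds 0)) :
    limsup (fun n : ℕ => nonlocalInfLap f α Φ φ (h_ n) (x_ n) / (h_ n) ^ 2) atTop < 0 := by
  have hφ2 : ContDiff ℝ 2 φ := hφ.of_le (by norm_num)
  set G : EuclideanSpace ℝ (Fin d) → ℝ := fun y => f y ^ α with hGdef
  have hG : ContDiff ℝ 1 G :=
    (hf.rpow_const_of_ne (fun x => (hfpos x).ne')).of_le (by norm_num)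
  have hGpos : ∀ x, 0 < G x := fun x => Real.rpow_pos_of_pos (hfpos x) α
  have hφd : Differentiable ℝ φ := hφ.differentiable (by norm_num)
  have hfd : Differentiable ℝ f := hf.differentiable (by norm_num)
  set p := gradient φ x₀ with hpdef
  have hpi : ∀ v, fderiv ℝ φ x₀ v = ⟪p, v⟫ := by
    intro v
    simp [hpdef, gradient, InnerProductSpace.toDual_symm_apply]
  have hfi : ∀ v, fderiv ℝ f x₀ v = ⟪gradient f x₀, v⟫ := by
    intro v
    simp [gradient, InnerProductSpace.toDual_symm_apply]
  have hGi : ∀ v, fderiv ℝ G x₀ v = α * f x₀ ^ (α - 1) * fderiv ℝ f x₀ v := by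
    intro v
    have := ((hfd x₀).hasFDerivAt.rpow_const (p := α) (Or.inl (hfpos x₀).ne')).fderiv
    rw [hGdef, this]
    simp
  set D := fderiv ℝ (fderiv ℝ φ) x₀ with hD
  have hDp : ⟪p, fderiv ℝ (gradient φ) x₀ p⟫ = D p p := by
    have h1 : DifferentiableAt ℝ (fderiv ℝ φ) x₀ :=
      ((hφ2.fderiv_right (m := 1) (by norm_num)).differentiable (by norm_num)) x₀
    let L : StrongDual ℝ (EuclideanSpace ℝ (Fin d)) →L[ℝ] EuclideanSpace ℝ (Fin d) :=
      { toFun := fun l => (InnerProductSpace.toDual ℝ (EuclideanSpace ℝ (Fin d))).symm l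
        map_add' := fun a b => map_add _ a b
        map_smul' := fun r a => by simp
        cont := (InnerProductSpace.toDual ℝ (EuclideanSpace ℝ (Fin d))).symm.continuous }
    have hL : ∀ l v, ⟪L l, v⟫ = l v := fun l v => InnerProductSpace.toDual_symm_apply
    have h2 : HasFDerivAt (gradient φ) (L.comp D) x₀ :=
      L.hasFDerivAt.comp x₀ h1.hasFDerivAt
    rw [h2.fderiv, real_inner_comm, ContinuousLinearMap.comp_apply, hL]
  set Q : EuclideanSpace ℝ (Fin d) → ℝ := fun v =>
    G x₀ * D v v + 2 * (fderiv ℝ G x₀ v * fderiv ℝ φ x₀ v) with hQdef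
  have hP : 0 < ‖p‖ := norm_pos_iff.2 hgrad
  have hQp : Q p < 0 := by
    have h1 : Q p = G x₀ * ‖p‖ ^ 2 * (D p p / ‖p‖ ^ 2 + 2 * α * (⟪gradient f x₀, p⟫ / f x₀)) := by
      have h2 : f x₀ ^ (α - 1) = G x₀ / f x₀ := by
        rw [Real.rpow_sub_one (hfpos x₀).ne']
      have h3 := (hfpos x₀).ne'
      simp only [hQdef]
      rw [hGi, hpi, hfi, h2, real_inner_self_eq_norm_sq]
      field_simp
    rw [h1]
    rw [hDp] at hpde
    exact mul_neg_of_pos_of_neg (mul_pos (hGpos x₀) (by positivity)) hpde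
  have hQh : ∀ (r : ℝ) v, Q (r • v) = r ^ 2 * Q v := by
    intro r v
    simp only [hQdef, map_smul, smul_apply, smul_eq_mul]
    ring
  have hQc : Continuous Q := by
    simp only [hQdef]
    fun_prop
  have hK : ∃ K : ℝ, ∀ v, |Q v| ≤ K * ‖v‖ ^ 2 := by
    refine ⟨G x₀ * ‖D‖ + 2 * (‖fderiv ℝ G x₀‖ * ‖fderiv ℝ φ x₀‖), fun v => ?_⟩
    have a1 : |D v v| ≤ ‖D‖ * ‖v‖ * ‖v‖ := D.le_opNorm₂ v v
    have a2 : |fderiv ℝ G x₀ v| ≤ ‖fderiv ℝ G x₀‖ * ‖v‖ := (fderiv ℝ G x₀).le_opNorm v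
    have a3 : |fderiv ℝ φ x₀ v| ≤ ‖fderiv ℝ φ x₀‖ * ‖v‖ := (fderiv ℝ φ x₀).le_opNorm v
    calc |Q v| ≤ |G x₀ * D v v| + |2 * (fderiv ℝ G x₀ v * fderiv ℝ φ x₀ v)| := abs_add_le _ _
      _ = G x₀ * |D v v| + 2 * (|fderiv ℝ G x₀ v| * |fderiv ℝ φ x₀ v|) := by
          rw [abs_mul, abs_mul, abs_mul, abs_of_pos (hGpos x₀), abs_two]
      _ ≤ G x₀ * (‖D‖ * ‖v‖ * ‖v‖) +
          2 * ((‖fderiv ℝ G x₀‖ * ‖v‖) * (‖fderiv ℝ φ x₀‖ * ‖v‖)) := by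
          have := (hGpos x₀).le
          gcongr
      _ = _ := by ring
  obtain ⟨K, hK⟩ := hK
  have hM : ∃ M : ℝ, 0 < M ∧ ∀ s, 0 ≤ s → Φ s ≤ M := by
    obtain ⟨C, hC⟩ := (isCompact_Icc (a := (0:ℝ)) (b := 2)).exists_bound_of_continuousOn
      hΦ.continuous.continuousOn
    refine ⟨max C 1, by positivity, fun s hs => ?_⟩
    by_cases h2 : s ≤ 2
    · exact (le_abs_self _).trans ((hC s ⟨hs, h2⟩).trans (le_max_left _ _))
    · rw [hΦsupp s (not_le.1 h2).le]; positivity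
  obtain ⟨M, hM, hΦM⟩ := hM
  set e := ‖p‖⁻¹ • p with he
  have hQe : Q e < 0 := by
    rw [he, hQh]
    exact mul_neg_of_pos_of_neg (by positivity) hQp
  obtain ⟨c, hc, hce⟩ : ∃ c : ℝ, 0 < c ∧ Q e < -(2 * c) :=
    ⟨-(Q e) / 4, by linarith, by linarith⟩
  obtain ⟨η, hη, hQη⟩ := Metric.eventually_nhds_iff.1
    (hQc.continuousAt.eventually (gt_mem_nhds hce) : ∀ᶠ u in nhds e, Q u < -(2 * c))
  have hg := hGpos x₀
  have hgp : 0 < G x₀ * ‖p‖ := mul_pos hg hP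
  obtain ⟨ε, hε, hε1, hε2, hε3⟩ : ∃ ε : ℝ, 0 < ε ∧ ε ≤ G x₀ * ‖p‖ / 2 ∧ ε ≤ c ∧
      4 * ε < η ^ 2 * (G x₀ * ‖p‖) := by
    refine ⟨min (min (G x₀ * ‖p‖ / 2) c) (η ^ 2 * (G x₀ * ‖p‖) / 5), by positivity, ?_, ?_, ?_⟩
    · exact (min_le_left _ _).trans (min_le_left _ _)
    · exact (min_le_left _ _).trans (min_le_right _ _)
    · have h1 := min_le_right (min (G x₀ * ‖p‖ / 2) c) (η ^ 2 * (G x₀ * ‖p‖) / 5)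
      have h2 : 0 < η ^ 2 * (G x₀ * ‖p‖) := by positivity
      linarith
  obtain ⟨δ1, hδ1, hW1⟩ := Metric.eventually_nhds_iff.1 (isLittleO_iff.1 (W_first hφ2 hG x₀) hε)
  obtain ⟨δ2, hδ2, hW2⟩ := Metric.eventually_nhds_iff.1 (isLittleO_iff.1 (W_second hφ2 hG x₀) hε)
  have hδ : 0 < min δ1 δ2 := lt_min hδ1 hδ2
  have ev1 : ∀ᶠ n in atTop, dist (x_ n) x₀ < min δ1 δ2 :=
    hx.eventually (Metric.ball_mem_nhds x₀ hδ)
  have ev2 : ∀ᶠ n in atTop, h_ n < min δ1 δ2 / 2 :=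
    hh0.eventually (gt_mem_nhds (by positivity))
  have hGt : Tendsto (fun n => G (x_ n)) atTop (nhds (G x₀)) := (hG.continuous.tendsto x₀).comp hx
  have ev3 : ∀ᶠ n in atTop, G x₀ / 2 < G (x_ n) := hGt.eventually (lt_mem_nhds (by linarith))
  have ev4 : ∀ᶠ n in atTop, G (x_ n) < 2 * G x₀ := hGt.eventually (gt_mem_nhds (by linarith))
  have main : ∀ᶠ n in atTop,
      nonlocalInfLap f α Φ φ (h_ n) (x_ n) / (h_ n) ^ 2 ≤ -(G x₀ / 2 * c / (36 * M)) ∧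
      -(8 * G x₀ * M * (K + ε)) ≤ nonlocalInfLap f α Φ φ (h_ n) (x_ n) / (h_ n) ^ 2 := by
    filter_upwards [ev1, ev2, ev3, ev4] with n h1 h2 h3 h4
    have hn := hh n
    set x := x_ n
    set h := h_ n
    set T : EuclideanSpace ℝ (Fin d) → ℝ := fun y =>
      Real.rpow (f x) α * Real.rpow (f y) α * Φ (dist x y / h) * (φ y - φ x) with hT
    have hTeq : ∀ w, T (x + w) = G x * Φ (‖w‖ / h) * (G (x + w) * (φ (x + w) - φ x)) := by
      intro w
      have : dist x (x + w) = ‖w‖ := by simp [dist_eq_norm]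
      simp only [hT, this, hGdef, Real.rpow_eq_pow]
      ring
    have hTc : Continuous T := by
      have c1 := hG.continuous
      have c2 := hΦ.continuous
      have c3 := hφ.continuous
      have : T = fun y => G x * G y * Φ (dist x y / h) * (φ y - φ x) := rfl
      rw [this]
      fun_prop
    have hT0 : ∀ y, 2 * h < dist y x → T y = 0 := by
      intro y hy
      have : Φ (dist x y / h) = 0 := by
        apply hΦsupp
        rw [le_div_iff₀ hn, dist_comm]
        exact hy.le
      simp only [hT, this]
      ring
    obtain ⟨⟨y, hy, hymax⟩, ⟨z, hz, hzmin⟩⟩ := cpt_attained T hTc x (2 * h) hT0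
    have hyx : T y = T (x + (y - x)) := by rw [add_sub_cancel]
    have hzx : T z = T (x + (z - x)) := by rw [add_sub_cancel]
    have hcore := core_est Φ hΦ1 hΦ0 hΦsupp M hM hΦM Q hQh K hK p hgrad (G x₀) c η ε (min δ1 δ2)
      hg hc hη hε hε1 hε2 hε3 (fun u hu => (hQη (by rwa [dist_eq_norm])).le)
      (fun w => G (x + w) * (φ (x + w) - φ x))
      (by
        intro v hv
        have := @hW1 (x, v) (by
          rw [Prod.dist_eq, max_lt_iff, dist_zero_right]
          exact ⟨h1.trans_le (min_le_left _ _), hv.trans_le (min_le_left _ _)⟩)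
        simpa [hpi] using this)
      (by
        intro v hv
        have := @hW2 (x, v) (by
          rw [Prod.dist_eq, max_lt_iff, dist_zero_right]
          exact ⟨h1.trans_le (min_le_right _ _), hv.trans_le (min_le_right _ _)⟩)
        simpa [hQdef, ← sub_eq_add_neg] using this)
      h (G x) hn (by linarith) h3.le h4.le (T y) (T z) (y - x) (z - x)
      (by rw [hyx, hTeq]) (by rw [hzx, hTeq])
      (fun w => by rw [← hTeq]; exact hymax _) (fun w => by rw [← hTeq]; exact hzmin _)
    have hH : nonlocalInfLap f α Φ φ h x = T y + T z := by
      rw [← hy, ← hz]; rfl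
    rw [hH, div_le_iff₀ (by positivity), le_div_iff₀ (by positivity)]
    exact hcore
  have hpos : 0 < G x₀ / 2 * c / (36 * M) := by positivity
  refine lt_of_le_of_lt (limsup_le_of_le ?_ (main.mono fun n hn => hn.1)) (neg_lt_zero.2 hpos)
  exact (isBoundedUnder_of_eventually_ge (main.mono fun n hn => hn.2)).isCoboundedUnder_le
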